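/- arXiv:2009.09475 — 2 statements merged into one kernel-verified Lean document; each statement's English description precedes it below -/
import Mathlib

section
/- Let E be a finite-dimensional complex vector space, let U ⊆ ℂ be open and connected, and let w₁, …, w_k : U → E be holomorphic maps such that for every t ∈ U the vectors w₁(t), …, w_k(t) are linearly independent, and for every t ∈ U and every i ∈ {1,…,k} the derivative w_i'(t) lies in the linear span of {w₁(t), …, w_k(t)}. Then the subspace span{w₁(t), …, w_k(t)} of E is the same for all t ∈ U. -/
/-!
Regard the family `w` as a differentiable family of injective operators `L t : F → E` with
`F = 𝕜^k`, so that the span is the range of `L t`. Fix `s` and a continuous left inverse `P` of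
`L s`. For `t` near `s` the operator `P ∘ L t` is invertible, and `u t = L t ∘ (P ∘ L t)⁻¹` has the
same range as `L t` and satisfies `P ∘ u t = 1`. The derivative of `u` takes values in the range of
`u t`, on which `P` is injective, whereas differentiating `P ∘ u = 1` shows that `P` kills it.
Hence `u' = 0` and `u` is constant near `s`.
-/

open Filter Topology

section LeftInverse

variable {𝕜 E F : Type*} [RCLike 𝕜] [NormedAddCommGroup E] [NormedSpace 𝕜 E]
  [NormedAddCommGroup F] [NormedSpace 𝕜 F] [FiniteDimensional 𝕜 F]

theorem hasLeftInverse_of_injective_of_finiteDimensional_domain {L : F →L[𝕜] E}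
    (hL : Function.Injective L) : L.HasLeftInverse := by
  let e : F ≃ₗ[𝕜] L.range := LinearEquiv.ofInjective L.toLinearMap hL
  obtain ⟨P, hP⟩ :=
    e.symm.toLinearMap.toContinuousLinearMap.exist_extension_of_finiteDimensional_range
  refine ⟨P, fun x => ?_⟩
  have hx := DFunLike.congr_fun hP (e x)
  simpa [e] using hx.symm

end LeftInverse

section NormalizedFrame

variable {𝕜 E F : Type*} [NontriviallyNormedField 𝕜] [NormedAddCommGroup E] [NormedSpace 𝕜 E]
  [NormedAddCommGroup F] [NormedSpace 𝕜 F]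

/-- The operator `L ∘ (P ∘ L)⁻¹`, which reparametrizes the domain of `L` so that `P` becomes a left
inverse; it represents the range of `L` in the graph chart of the Grassmannian given by `P`. Since
`Ring.inverse` is total, it is `0` when `P ∘ L` is not invertible. -/
noncomputable def normalizedFrame (P : E →L[𝕜] F) (L : F →L[𝕜] E) : F →L[𝕜] E :=
  L ∘L Ring.inverse (P ∘L L)

theorem comp_normalizedFrame {P : E →L[𝕜] F} {L : F →L[𝕜] E} (h : IsUnit (P ∘L L)) :
    P ∘L normalizedFrame P L = 1 :=
  Ring.mul_inverse_cancel _ h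

theorem normalizedFrame_comp {P : E →L[𝕜] F} {L : F →L[𝕜] E} (h : IsUnit (P ∘L L)) :
    normalizedFrame P L ∘L (P ∘L L) = L :=
  congrArg (L ∘L ·) (Ring.inverse_mul_cancel _ h)

theorem range_normalizedFrame {P : E →L[𝕜] F} {L : F →L[𝕜] E} (h : IsUnit (P ∘L L)) :
    (normalizedFrame P L).range = L.range := by
  apply le_antisymm
  · exact LinearMap.range_comp_le_range _ _
  · conv_lhs => rw [← normalizedFrame_comp h]
    exact LinearMap.range_comp_le_range _ _

theorem eventually_isUnit_comp {X : Type*} [TopologicalSpace X] [CompleteSpace F]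
    {P : E →L[𝕜] F} {L : X → F →L[𝕜] E} {t : X} (hL : ContinuousAt L t)
    (hP : IsUnit (P ∘L L t)) : ∀ᶠ y in 𝓝 t, IsUnit (P ∘L L y) :=
  (continuousAt_const.clm_comp hL).eventually (Units.isOpen.mem_nhds hP)

variable {V : Type*} [NormedAddCommGroup V] [NormedSpace 𝕜 V]

theorem fderiv_clm_comp_apply_mem_range {G : Type*} [NormedAddCommGroup G] [NormedSpace 𝕜 G]
    {L : V → F →L[𝕜] E} {B : V → G →L[𝕜] F} {t : V}
    (hL : DifferentiableAt 𝕜 L t) (hB : DifferentiableAt 𝕜 B t)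
    (hrange : ∀ h x, fderiv 𝕜 L t h x ∈ (L t).range) (h : V) (x : G) :
    fderiv 𝕜 (fun y => L y ∘L B y) t h x ∈ (L t).range := by
  rw [fderiv_clm_comp hL hB]
  exact add_mem (LinearMap.mem_range_self _ _) (hrange h (B t x))

theorem fderiv_eq_zero_of_eventually_comp_eq_one {u : V → F →L[𝕜] E} {P : E →L[𝕜] F} {t : V}
    (hu : DifferentiableAt 𝕜 u t) (hP : ∀ᶠ y in 𝓝 t, P ∘L u y = 1)
    (hrange : ∀ h x, fderiv 𝕜 u t h x ∈ (u t).range) : fderiv 𝕜 u t = 0 := by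
  have hPu' (h : V) : P ∘L fderiv 𝕜 u t h = 0 := by
    have hzero : fderiv 𝕜 (fun y => P ∘L u y) t = 0 := by
      rw [EventuallyEq.fderiv_eq hP, fderiv_const_apply]
    rw [fderiv_clm_comp (differentiableAt_const P) hu] at hzero
    simpa using DFunLike.congr_fun hzero h
  ext h x
  obtain ⟨c, hc⟩ := hrange h x
  have hc0 : c = 0 := calc
    c = P (u t c) := (DFunLike.congr_fun hP.self_of_nhds c).symm
    _ = P (fderiv 𝕜 u t h x) := congrArg P hc
    _ = 0 := DFunLike.congr_fun (hPu' h) x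
  simpa [hc0] using hc.symm

theorem differentiableAt_inverse_comp [CompleteSpace F] {P : E →L[𝕜] F} {L : V → F →L[𝕜] E} {t : V}
    (hL : DifferentiableAt 𝕜 L t) (hP : IsUnit (P ∘L L t)) :
    DifferentiableAt 𝕜 (fun y => Ring.inverse (P ∘L L y)) t :=
  (differentiableAt_inverse (𝕜 := 𝕜) hP).fun_comp' t ((differentiableAt_const P).clm_comp hL)

theorem differentiableAt_normalizedFrame [CompleteSpace F] {P : E →L[𝕜] F} {L : V → F →L[𝕜] E}
    {t : V} (hL : DifferentiableAt 𝕜 L t) (hP : IsUnit (P ∘L L t)) :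
    DifferentiableAt 𝕜 (fun y => normalizedFrame P (L y)) t :=
  hL.clm_comp (differentiableAt_inverse_comp hL hP)

theorem fderiv_normalizedFrame_eq_zero [CompleteSpace F] {P : E →L[𝕜] F} {L : V → F →L[𝕜] E} {t : V}
    (hL : DifferentiableAt 𝕜 L t) (hP : IsUnit (P ∘L L t))
    (hrange : ∀ h x, fderiv 𝕜 L t h x ∈ (L t).range) :
    fderiv 𝕜 (fun y => normalizedFrame P (L y)) t = 0 := by
  refine fderiv_eq_zero_of_eventually_comp_eq_one (differentiableAt_normalizedFrame hL hP)
    ((eventually_isUnit_comp hL.continuousAt hP).mono fun _ => comp_normalizedFrame) ?_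
  rw [range_normalizedFrame hP]
  exact fderiv_clm_comp_apply_mem_range hL (differentiableAt_inverse_comp hL hP) hrange

end NormalizedFrame

section RangeConstant

variable {𝕜 V E F : Type*} [RCLike 𝕜] [NormedAddCommGroup V] [NormedSpace 𝕜 V]
  [NormedAddCommGroup E] [NormedSpace 𝕜 E] [NormedAddCommGroup F] [NormedSpace 𝕜 F]

theorem eventually_eq_of_eventually_fderiv_eq_zero {u : V → E} {s : V}
    (hu : ∀ᶠ t in 𝓝 s, DifferentiableAt 𝕜 u t) (hu' : ∀ᶠ t in 𝓝 s, fderiv 𝕜 u t = 0) :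
    ∀ᶠ t in 𝓝 s, u t = u s := by
  let _ : NormedSpace ℝ V := .restrictScalars ℝ 𝕜 V
  obtain ⟨r, hr, hball⟩ := Metric.eventually_nhds_iff_ball.1 (hu.and hu')
  filter_upwards [Metric.ball_mem_nhds s hr] with t ht
  exact Metric.isOpen_ball.is_const_of_fderiv_eq_zero (convex_ball s r).isPreconnected
    (fun y hy => (hball y hy).1.differentiableWithinAt) (fun y hy => (hball y hy).2)
    ht (Metric.mem_ball_self hr)

theorem eventually_range_eq_of_fderiv_apply_mem_range [CompleteSpace F] {L : V → F →L[𝕜] E} {s : V}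
    (hL : ∀ᶠ t in 𝓝 s, DifferentiableAt 𝕜 L t) (hs : (L s).HasLeftInverse)
    (hrange : ∀ᶠ t in 𝓝 s, ∀ h x, fderiv 𝕜 L t h x ∈ (L t).range) :
    ∀ᶠ t in 𝓝 s, (L t).range = (L s).range := by
  obtain ⟨P, hP⟩ := hs
  have hPs : IsUnit (P ∘L L s) := by
    rw [show P ∘L L s = 1 from ContinuousLinearMap.ext hP]
    exact isUnit_one
  have hunit := eventually_isUnit_comp hL.self_of_nhds.continuousAt hPs
  have hconst : ∀ᶠ t in 𝓝 s, normalizedFrame P (L t) = normalizedFrame P (L s) := by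
    apply eventually_eq_of_eventually_fderiv_eq_zero (𝕜 := 𝕜)
    · filter_upwards [hL, hunit] with t using differentiableAt_normalizedFrame
    · filter_upwards [hL, hunit, hrange] with t using fderiv_normalizedFrame_eq_zero
  filter_upwards [hunit, hconst] with t ht heq
  rw [← range_normalizedFrame ht, heq, range_normalizedFrame hPs]

theorem range_eq_of_fderiv_apply_mem_range [CompleteSpace F] {L : V → F →L[𝕜] E} {U : Set V}
    (hU : IsOpen U) (hconn : IsPreconnected U) (hL : ∀ t ∈ U, DifferentiableAt 𝕜 L t)
    (hinv : ∀ t ∈ U, (L t).HasLeftInverse)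
    (hrange : ∀ t ∈ U, ∀ h x, fderiv 𝕜 L t h x ∈ (L t).range) {s t : V} (hs : s ∈ U) (ht : t ∈ U) :
    (L s).range = (L t).range := by
  refine hconn.induction₂ (fun x y => (L x).range = (L y).range) (fun x hx => ?_)
    (fun _ _ _ _ _ _ => Eq.trans) (fun _ _ _ _ => Eq.symm) hs ht
  have hUx : ∀ᶠ y in 𝓝 x, y ∈ U := hU.mem_nhds hx
  exact nhdsWithin_le_nhds <| (eventually_range_eq_of_fderiv_apply_mem_range (hUx.mono hL)
    (hinv x hx) (hUx.mono hrange)).mono fun _ => Eq.symm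

end RangeConstant

section Span

variable {𝕜 E ι : Type*} [NontriviallyNormedField 𝕜] [CompleteSpace 𝕜]
  [NormedAddCommGroup E] [NormedSpace 𝕜 E] [Fintype ι] [DecidableEq ι]

theorem toLinearMap_piRing_symm (v : ι → E) :
    ((ContinuousLinearEquiv.piRing (𝕜 := 𝕜) ι).symm v).toLinearMap =
      Fintype.linearCombination 𝕜 v :=
  LinearMap.ext fun x => LinearEquiv.piRing_symm_apply 𝕜 v x

theorem range_piRing_symm (v : ι → E) :
    ((ContinuousLinearEquiv.piRing (𝕜 := 𝕜) ι).symm v).range =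
      Submodule.span 𝕜 (Set.range v) := by
  rw [toLinearMap_piRing_symm, Fintype.range_linearCombination]

theorem injective_piRing_symm {v : ι → E} (hv : LinearIndependent 𝕜 v) :
    Function.Injective ((ContinuousLinearEquiv.piRing (𝕜 := 𝕜) ι).symm v) := by
  rw [← ContinuousLinearMap.coe_coe, toLinearMap_piRing_symm]
  exact hv.fintypeLinearCombination_injective

theorem piRing_symm_apply_mem {v : ι → E} {p : Submodule 𝕜 E} (hv : ∀ i, v i ∈ p) (x : ι → 𝕜) :
    (ContinuousLinearEquiv.piRing (𝕜 := 𝕜) ι).symm v x ∈ p := by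
  have hx : (ContinuousLinearEquiv.piRing (𝕜 := 𝕜) ι).symm v x ∈ Submodule.span 𝕜 (Set.range v) :=
    range_piRing_symm (𝕜 := 𝕜) v ▸ LinearMap.mem_range_self _ x
  exact Submodule.span_le.2 (Set.range_subset_iff.2 hv) hx

end Span

theorem span_constant_of_deriv_mem_span_general
    {𝕜 V E ι : Type*} [RCLike 𝕜] [NormedAddCommGroup V] [NormedSpace 𝕜 V]
    [NormedAddCommGroup E] [NormedSpace 𝕜 E] [Finite ι]
    {U : Set V} (hU : IsOpen U) (hconn : IsPreconnected U) {w : ι → V → E}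
    (hdiff : ∀ i, ∀ t ∈ U, DifferentiableAt 𝕜 (w i) t)
    (hindep : ∀ t ∈ U, LinearIndependent 𝕜 fun i => w i t)
    (hder : ∀ t ∈ U, ∀ i h, fderiv 𝕜 (w i) t h ∈ Submodule.span 𝕜 (Set.range fun j => w j t))
    {s t : V} (hs : s ∈ U) (ht : t ∈ U) :
    Submodule.span 𝕜 (Set.range fun i => w i s) =
      Submodule.span 𝕜 (Set.range fun i => w i t) := by
  classical
  have := Fintype.ofFinite ι
  let e : (ι → E) ≃L[𝕜] ((ι → 𝕜) →L[𝕜] E) := (ContinuousLinearEquiv.piRing ι).symm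
  let L : V → (ι → 𝕜) →L[𝕜] E := e ∘ fun y i => w i y
  have hrange (y : V) : (L y).range = Submodule.span 𝕜 (Set.range fun i => w i y) :=
    range_piRing_symm _
  have hL : ∀ y ∈ U, DifferentiableAt 𝕜 L y := fun y hy =>
    e.differentiableAt.comp y (differentiableAt_pi.2 fun i => hdiff i y hy)
  have hinv : ∀ y ∈ U, (L y).HasLeftInverse := fun y hy =>
    hasLeftInverse_of_injective_of_finiteDimensional_domain (injective_piRing_symm (hindep y hy))
  have hL' : ∀ y ∈ U, ∀ h x, fderiv 𝕜 L y h x ∈ (L y).range := by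
    intro y hy h x
    rw [hrange, e.comp_fderiv, fderiv_pi fun i => hdiff i y hy]
    exact piRing_symm_apply_mem (fun i => hder y hy i h) x
  rw [← hrange s, ← hrange t]
  exact range_eq_of_fderiv_apply_mem_range hU hconn hL hinv hL' hs ht

/-- If `w₁, …, w_k : U → E` are holomorphic on an open connected set `U ⊆ ℂ`, pointwise
linearly independent, and each derivative `w_i'(t)` lies in `span {w₁(t), …, w_k(t)}`, then
the subspace `span {w₁(t), …, w_k(t)}` of `E` is the same for all `t ∈ U`. -/
theorem span_constant_of_deriv_mem_span
    {E : Type*} [NormedAddCommGroup E] [NormedSpace ℂ E] [FiniteDimensional ℂ E]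
    (k : ℕ) (U : Set ℂ) (hU : IsOpen U) (hconn : IsConnected U)
    (w : Fin k → ℂ → E)
    (hdiff : ∀ i, ∀ t ∈ U, DifferentiableAt ℂ (w i) t)
    (hindep : ∀ t ∈ U, LinearIndependent ℂ fun i => w i t)
    (hder : ∀ t ∈ U, ∀ i, deriv (w i) t ∈ Submodule.span ℂ (Set.range fun j => w j t)) :
    ∀ s ∈ U, ∀ t ∈ U,
      Submodule.span ℂ (Set.range fun i => w i s) =
        Submodule.span ℂ (Set.range fun i => w i t) := by
  refine fun s hs t ht => span_constant_of_deriv_mem_span_general hU hconn.isPreconnected hdiff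
    hindep (fun y hy i h => ?_) hs ht
  exact fderiv_eq_smul_deriv (f := w i) h ▸ Submodule.smul_mem _ h (hder y hy i)
end

section
/- Let x : ℂⁿ → ℂ^{N} be C^∞ near a point u⁰ ∈ ℂⁿ, with partial derivatives x_i = ∂x/∂u_i and x_{ij} = ∂²x/∂u_i∂u_j, and third derivatives x_{ijk}. Define y on variables (u, λ₂, …, λ_n, μ₂, …, μ_n, α, β) ∈ ℂⁿ × ℂ^{n−1} × ℂ^{n−1} × ℂ × ℂ by y = x(u) + α Σ_{i=1}^n λ_i x_i(u) + β ( Σ_{i,j=1}^n x_{ij}(u) λ_i λ_j + 2 Σ_{i=1}^n μ_i x_i(u) ), where by convention λ₁ = 1 and μ₁ = 0. Then at any point P = (u⁰, λ, μ, α, β) with α ≠ 0 and β ≠ 0, the linear span of {y(P)} together with the range of the Fréchet derivative of y at P equals the linear span of the 3n+1 vectors: x(u⁰); x_k(u⁰) for 1 ≤ k ≤ n; Σ_{i=1}^n x_{ij}(u⁰) λ_i for 1 ≤ j ≤ n; and Σ_{i,j=1}^n x_{kij}(u⁰) λ_i λ_j + 2 Σ_{j=2}^n x_{kj}(u⁰)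 μ_j for 1 ≤ k ≤ n. (This is the parametric content of Proposition 4.1: 2-osculating regularity of X is equivalent to the linear independence of these 3n+1 vectors.) -/
/-- The iterated partial derivative `x_{i₁…i_h}` of `x` at `q`. -/
noncomputable def pdv {n : ℕ} {E : Type*} [NormedAddCommGroup E] [NormedSpace ℂ E]
    {h : ℕ} (x : (Fin n → ℂ) → E) (q : Fin n → ℂ) (idx : Fin h → Fin n) : E :=
  iteratedFDeriv ℂ h x q fun s => Pi.single (idx s) 1

section Derivatives

variable {n : ℕ} {E : Type*} [NormedAddCommGroup E] [NormedSpace ℂ E]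

/-- `x_i(q)`. -/
noncomputable def pd1 (x : (Fin n → ℂ) → E) (q : Fin n → ℂ) (i : Fin n) : E :=
  pdv x q ![i]

/-- `x_{ij}(q)`. -/
noncomputable def pd2 (x : (Fin n → ℂ) → E) (q : Fin n → ℂ) (i j : Fin n) : E :=
  pdv x q ![i, j]

/-- `x_{ijk}(q)`. -/
noncomputable def pd3 (x : (Fin n → ℂ) → E) (q : Fin n → ℂ) (i j k : Fin n) : E :=
  pdv x q ![i, j, k]

end Derivatives

/-- Extension of `(λ₂, …, λₙ)` to `(1, λ₂, …, λₙ)` (the convention `λ₁ = 1`). -/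
noncomputable def extOne {n : ℕ} [NeZero n] (l : {i : Fin n // i ≠ 0} → ℂ) : Fin n → ℂ :=
  fun i => if h : i = 0 then 1 else l ⟨i, h⟩

/-- Extension of `(μ₂, …, μₙ)` to `(0, μ₂, …, μₙ)` (the convention `μ₁ = 0`). -/
noncomputable def extZero {n : ℕ} [NeZero n] (m : {i : Fin n // i ≠ 0} → ℂ) : Fin n → ℂ :=
  fun i => if h : i = 0 then 0 else m ⟨i, h⟩

/-!
Write `v = λ`, `w = μ` and let `A = x'(u₀)`, `Q = x''(u₀)(v, ·)` and
`C = x'''(u₀)(·, v, v) + 2 x''(u₀)(·, w)`. By the symmetry of `x''`, the differential of `y` at `P`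
sends `(du, dl, dm, da, db)` to
`A du + α (Q du + A dl) + da A v + β (C du + 2 Q dl + 2 A dm) + db (Q v + 2 A w)`,
where `dl` and `dm` range over the hyperplane of vectors with vanishing first coordinate. This
hyperplane and `v` span `ℂⁿ`. Hence, as `β ≠ 0`, the directions `dm`, `da` yield the whole range of
`A`; modulo that range, `dl`, `db` yield the range of `Q`; modulo both, `du` yields the range of `C`
and `y(P)` yields `x(u₀)`.
-/

section LinearAlgebra

variable {K V W E : Type*} [Ring K] [AddCommGroup V] [Module K V] [AddCommGroup W] [Module K W]
  [AddCommGroup E] [Module K E] {ι : W →ₗ[K] V} {v : V}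

lemma span_singleton_add_apply_sup_range {e : V} (he : K ∙ e ⊔ ι.range = ⊤) (z : W) :
    K ∙ (e + ι z) ⊔ ι.range = ⊤ := by
  rw [eq_top_iff, ← he, sup_le_iff, Submodule.span_singleton_le_iff_mem]
  refine ⟨?_, le_sup_right⟩
  have hsum : e + ι z ∈ K ∙ (e + ι z) ⊔ ι.range :=
    Submodule.mem_sup_left (Submodule.mem_span_singleton_self _)
  have hz : ι z ∈ K ∙ (e + ι z) ⊔ ι.range := Submodule.mem_sup_right (ι.mem_range_self z)
  exact (Submodule.add_mem_iff_left _ hz).1 hsum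

lemma range_le_of_span_singleton_sup_range_eq_top (hv : K ∙ v ⊔ ι.range = ⊤) {f : V →ₗ[K] E}
    {S : Submodule K E} (hfv : f v ∈ S) (hfι : ∀ z, f (ι z) ∈ S) : f.range ≤ S := by
  rw [LinearMap.range_eq_map, ← hv, Submodule.map_le_iff_le_comap, sup_le_iff,
    Submodule.span_singleton_le_iff_mem]
  exact ⟨hfv, by rintro _ ⟨z, rfl⟩; exact hfι z⟩

/-- The differential of `osc2Param` at a point with `λ = v` and `μ = w`, with the derivatives of `x`
replaced by arbitrary linear maps: `A` stands for `x'`, `Q` for `x''(v, ·)` and `C` for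
`x'''(·, v, v) + 2 x''(·, w)`. -/
def osc2Differential (A Q C : V →ₗ[K] E) (ι : W →ₗ[K] V) (v w : V) (α β : K)
    (d : V × W × W × K × K) : E :=
  A d.1 + (α • (Q d.1 + A (ι d.2.1)) + d.2.2.2.1 • A v)
    + (β • (C d.1 + (2 : K) • Q (ι d.2.1) + (2 : K) • A (ι d.2.2.1))
      + d.2.2.2.2 • (Q v + (2 : K) • A w))

variable (A Q C : V →ₗ[K] E) (w : V) (p : E) (α β : K)

lemma span_union_range_osc2Differential_le :
    Submodule.span K ({p + α • A v + β • (Q v + (2 : K) • A w)}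
        ∪ Set.range (osc2Differential A Q C ι v w α β)) ≤
      K ∙ p ⊔ A.range ⊔ Q.range ⊔ C.range := by
  set T := K ∙ p ⊔ A.range ⊔ Q.range ⊔ C.range
  have hp : p ∈ T := Submodule.mem_sup_left <| Submodule.mem_sup_left <|
    Submodule.mem_sup_left <| Submodule.mem_span_singleton_self p
  have hA (z : V) : A z ∈ T := Submodule.mem_sup_left <| Submodule.mem_sup_left <|
    Submodule.mem_sup_right <| A.mem_range_self z
  have hQ (z : V) : Q z ∈ T :=
    Submodule.mem_sup_left <| Submodule.mem_sup_right <| Q.mem_range_self z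
  have hC (z : V) : C z ∈ T := Submodule.mem_sup_right <| C.mem_range_self z
  rw [Submodule.span_le]
  rintro _ (rfl | ⟨⟨du, dl, dm, da, db⟩, rfl⟩)
  · exact T.add_mem (T.add_mem hp (T.smul_mem _ (hA _)))
      (T.smul_mem _ (T.add_mem (hQ _) (T.smul_mem _ (hA _))))
  · have hα := T.add_mem (T.smul_mem α (T.add_mem (hQ du) (hA (ι dl)))) (T.smul_mem da (hA v))
    have hβ := T.smul_mem β (T.add_mem (T.add_mem (hC du) (T.smul_mem 2 (hQ (ι dl))))
      (T.smul_mem 2 (hA (ι dm))))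
    have hdb := T.smul_mem db (T.add_mem (hQ v) (T.smul_mem 2 (hA w)))
    exact T.add_mem (T.add_mem (hA du) hα) (T.add_mem hβ hdb)

end LinearAlgebra

lemma le_span_union_range_osc2Differential {K V W E : Type*} [DivisionRing K] [NeZero (2 : K)]
    [AddCommGroup V] [Module K V] [AddCommGroup W] [Module K W] [AddCommGroup E] [Module K E]
    (A Q C : V →ₗ[K] E) {ι : W →ₗ[K] V} {v : V} (hv : K ∙ v ⊔ ι.range = ⊤) (w : V) (p : E)
    (α : K) {β : K} (hβ : β ≠ 0) :
    K ∙ p ⊔ A.range ⊔ Q.range ⊔ C.range ≤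
      Submodule.span K ({p + α • A v + β • (Q v + (2 : K) • A w)}
        ∪ Set.range (osc2Differential A Q C ι v w α β)) := by
  set S := Submodule.span K ({p + α • A v + β • (Q v + (2 : K) • A w)}
    ∪ Set.range (osc2Differential A Q C ι v w α β))
  have hD (d) : osc2Differential A Q C ι v w α β d ∈ S := Submodule.subset_span (Or.inr ⟨d, rfl⟩)
  have hA : A.range ≤ S := by
    refine range_le_of_span_singleton_sup_range_eq_top hv ?_ fun z => ?_
    · simpa [osc2Differential] using hD (0, 0, 0, 1, 0)
    · have hdm : β • (2 : K) • A (ι z) ∈ S := by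
        simpa [osc2Differential] using hD (0, 0, z, 0, 0)
      rwa [S.smul_mem_iff hβ, S.smul_mem_iff two_ne_zero] at hdm
  have hAS (z : V) : A z ∈ S := hA (A.mem_range_self z)
  have hQ : Q.range ≤ S := by
    refine range_le_of_span_singleton_sup_range_eq_top hv ?_ fun z => ?_
    · have hdb : Q v + (2 : K) • A w ∈ S := by
        simpa [osc2Differential] using hD (0, 0, 0, 0, 1)
      rwa [S.add_mem_iff_left (S.smul_mem _ (hAS w))] at hdb
    · have hdl : α • A (ι z) + β • (2 : K) • Q (ι z) ∈ S := by
        simpa [osc2Differential] using hD (0, z, 0, 0, 0)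
      rwa [S.add_mem_iff_right (S.smul_mem _ (hAS _)), S.smul_mem_iff hβ,
        S.smul_mem_iff two_ne_zero] at hdl
  have hQS (z : V) : Q z ∈ S := hQ (Q.mem_range_self z)
  have hC : C.range ≤ S := by
    rintro _ ⟨z, rfl⟩
    have hdu : A z + α • Q z + β • C z ∈ S := by
      simpa [osc2Differential] using hD (z, 0, 0, 0, 0)
    rwa [S.add_mem_iff_right (S.add_mem (hAS z) (S.smul_mem _ (hQS z))), S.smul_mem_iff hβ] at hdu
  have hp : p ∈ S := by
    have hy : p + α • A v + β • (Q v + (2 : K) • A w) ∈ S := Submodule.subset_span (Or.inl rfl)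
    rwa [S.add_mem_iff_left (S.smul_mem _ (S.add_mem (hQS v) (S.smul_mem _ (hAS w)))),
      S.add_mem_iff_left (S.smul_mem _ (hAS v))] at hy
  exact sup_le (sup_le (sup_le ((Submodule.span_singleton_le_iff_mem _ _).2 hp) hA) hQ) hC

section Osc2Param

variable {𝕜 V W E : Type*} [NontriviallyNormedField 𝕜] [NormedAddCommGroup V] [NormedSpace 𝕜 V]
  [NormedAddCommGroup W] [NormedSpace 𝕜 W] [NormedAddCommGroup E] [NormedSpace 𝕜 E]

/-- The parametrization `y(u, λ, μ, α, β) = x + α x'(λ) + β (x''(λ, λ) + 2 x'(μ))` of the affine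
cone over the variety of 2-osculating spaces of `x : V → E`, free of coordinates: `λ` runs through
the affine subspace `e + ι(W)` of `V` and `μ` through its direction `ι(W)`. The conventions
`λ₁ = 1`, `μ₁ = 0` are the case where `e` is the first basis vector and `ι` extends by zero. -/
noncomputable def osc2Param (x : V → E) (ι : W →L[𝕜] V) (e : V) (q : V × W × W × 𝕜 × 𝕜) : E :=
  x q.1 + q.2.2.2.1 • fderiv 𝕜 x q.1 (e + ι q.2.1)
    + q.2.2.2.2 • (fderiv 𝕜 (fderiv 𝕜 x) q.1 (e + ι q.2.1) (e + ι q.2.1)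
        + (2 : 𝕜) • fderiv 𝕜 x q.1 (ι q.2.2.1))

/-- The linear map `x'''(·, v, v) + 2 x''(·, w)`, with `x''` and `x'''` taken at `u`. -/
noncomputable def osc2ThirdOrder (x : V → E) (u v w : V) : V →L[𝕜] E :=
  ((fderiv 𝕜 (fderiv 𝕜 (fderiv 𝕜 x)) u).flip v).flip v
    + (2 : 𝕜) • (fderiv 𝕜 (fderiv 𝕜 x) u).flip w

variable {x : V → E} {u : V}

lemma fderiv_osc2Param (hx : ContDiffAt 𝕜 3 x u) (hsymm : IsSymmSndFDerivAt 𝕜 x u)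
    (ι : W →L[𝕜] V) (e : V) (l m : W) (a b : 𝕜) :
    ⇑(fderiv 𝕜 (osc2Param x ι e) (u, l, m, a, b)) =
      osc2Differential (K := 𝕜) (fderiv 𝕜 x u) (fderiv 𝕜 (fderiv 𝕜 x) u (e + ι l))
        (osc2ThirdOrder (𝕜 := 𝕜) x u (e + ι l) (ι m)) ι (e + ι l) (ι m) a b := by
  have hx' : ContDiffAt 𝕜 2 (fderiv 𝕜 x) u := hx.fderiv_right (by norm_num)
  have hx'' : ContDiffAt 𝕜 1 (fderiv 𝕜 (fderiv 𝕜 x)) u := hx'.fderiv_right (by norm_num)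
  set P : V × W × W × 𝕜 × 𝕜 := (u, l, m, a, b)
  have dU : HasFDerivAt (fun q : V × W × W × 𝕜 × 𝕜 => q.1) (.fst 𝕜 _ _) P := hasFDerivAt_fst
  have dRest : HasFDerivAt (fun q : V × W × W × 𝕜 × 𝕜 => q.2) (.snd 𝕜 _ _) P := hasFDerivAt_snd
  have dL := (ι.hasFDerivAt.comp P dRest.fst).const_add e
  have dM := ι.hasFDerivAt.comp P dRest.snd.fst
  have dX := (hx.differentiableAt (by norm_num)).hasFDerivAt.comp P dU
  have dX' := (hx'.differentiableAt (by norm_num)).hasFDerivAt.comp P dU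
  have dX'' := (hx''.differentiableAt (by norm_num)).hasFDerivAt.comp P dU
  have dY := (dX.add (dRest.snd.snd.fst.smul (dX'.clm_apply dL))).add
    (dRest.snd.snd.snd.smul
      (((dX''.clm_apply dL).clm_apply dL).add ((dX'.clm_apply dM).const_smul (2 : 𝕜))))
  have hfderiv : fderiv 𝕜 (osc2Param x ι e) P = _ := HasFDerivAt.fderiv dY
  funext ⟨du, dl, dm, da, db⟩
  rw [hfderiv]
  have hsymm_du := hsymm.eq du (e + ι l)
  have hsymm_dl := hsymm.eq (ι dl) (e + ι l)
  simp only [P, osc2Differential, osc2ThirdOrder, hsymm_du, hsymm_dl, Function.comp_apply,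
    Pi.add_apply, Pi.smul_apply, add_apply, smul_apply, ContinuousLinearMap.comp_apply,
    ContinuousLinearMap.coe_fst', ContinuousLinearMap.coe_snd', ContinuousLinearMap.flip_apply,
    ContinuousLinearMap.smulRight_apply, ContinuousLinearMap.coe_coe]
  module

theorem span_osc2Param_union_range_fderiv [NeZero (2 : 𝕜)] (hx : ContDiffAt 𝕜 3 x u)
    (hsymm : IsSymmSndFDerivAt 𝕜 x u) {ι : W →L[𝕜] V} {e : V}
    (he : 𝕜 ∙ e ⊔ (ι : W →ₗ[𝕜] V).range = ⊤) (l m : W) (a : 𝕜) {b : 𝕜} (hb : b ≠ 0) :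
    Submodule.span 𝕜 ({osc2Param x ι e (u, l, m, a, b)}
        ∪ Set.range (fderiv 𝕜 (osc2Param x ι e) (u, l, m, a, b))) =
      𝕜 ∙ x u ⊔ (fderiv 𝕜 x u : V →ₗ[𝕜] E).range
        ⊔ (fderiv 𝕜 (fderiv 𝕜 x) u (e + ι l) : V →ₗ[𝕜] E).range
        ⊔ (osc2ThirdOrder (𝕜 := 𝕜) x u (e + ι l) (ι m) : V →ₗ[𝕜] E).range := by
  rw [fderiv_osc2Param hx hsymm]
  exact le_antisymm (span_union_range_osc2Differential_le ..)
    (le_span_union_range_osc2Differential _ _ _ (span_singleton_add_apply_sup_range he l) _ _ _ hb)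

end Osc2Param

section Coordinates

lemma span_range_apply_single {R ι M : Type*} [Semiring R] [Finite ι] [DecidableEq ι]
    [AddCommMonoid M] [Module R M] (f : (ι → R) →ₗ[R] M) :
    Submodule.span R (Set.range fun i => f (Pi.single i 1)) = f.range := by
  rw [LinearMap.range_eq_map, ← (Pi.basisFun R ι).span_eq, Submodule.map_span, ← Set.range_comp]
  simp [Function.comp_def]

lemma sum_smul_apply_single {R ι M F : Type*} [Semiring R] [Fintype ι] [DecidableEq ι]
    [AddCommMonoid M] [Module R M] [FunLike F (ι → R) M] [LinearMapClass F R (ι → R) M]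
    (f : F) (v : ι → R) :
    ∑ i, v i • f (Pi.single i 1) = f v := by
  conv_rhs => rw [pi_eq_sum_univ' v, map_sum]
  simp

lemma sum_sum_smul_apply_single {𝕜 ι κ M : Type*} [NontriviallyNormedField 𝕜] [Fintype ι]
    [DecidableEq ι] [Fintype κ] [DecidableEq κ] [NormedAddCommGroup M] [NormedSpace 𝕜 M]
    (B : (ι → 𝕜) →L[𝕜] (κ → 𝕜) →L[𝕜] M) (v : ι → 𝕜) (w : κ → 𝕜) :
    ∑ i, ∑ j, (v i * w j) • B (Pi.single i 1) (Pi.single j 1) = B v w := by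
  calc ∑ i, ∑ j, (v i * w j) • B (Pi.single i 1) (Pi.single j 1)
      = ∑ i, v i • B (Pi.single i 1) w := by
        simp only [mul_smul, ← Finset.smul_sum, sum_smul_apply_single]
    _ = B v w := sum_smul_apply_single (B.flip w) v

variable {n : ℕ} {E : Type*} [NormedAddCommGroup E] [NormedSpace ℂ E] (x : (Fin n → ℂ) → E)
  (u v w : Fin n → ℂ)

lemma pd1_eq_fderiv (i : Fin n) : pd1 x u i = fderiv ℂ x u (Pi.single i 1) := by
  simp [pd1, pdv, iteratedFDeriv_one_apply]

lemma pd2_eq_fderiv (i j : Fin n) :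
    pd2 x u i j = fderiv ℂ (fderiv ℂ x) u (Pi.single i 1) (Pi.single j 1) := by
  simp [pd2, pdv, iteratedFDeriv_two_apply]

lemma pd3_eq_fderiv (k i j : Fin n) :
    pd3 x u k i j = fderiv ℂ (fderiv ℂ (fderiv ℂ x)) u
      (Pi.single k 1) (Pi.single i 1) (Pi.single j 1) := by
  rw [pd3, pdv, iteratedFDeriv_succ_apply_right, iteratedFDeriv_two_apply]
  rfl

lemma sum_smul_pd1 : ∑ i, v i • pd1 x u i = fderiv ℂ x u v := by
  simpa only [pd1_eq_fderiv] using sum_smul_apply_single (fderiv ℂ x u) v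

lemma sum_smul_pd2_left (j : Fin n) :
    ∑ i, v i • pd2 x u i j = fderiv ℂ (fderiv ℂ x) u v (Pi.single j 1) := by
  simpa only [pd2_eq_fderiv, ContinuousLinearMap.flip_apply] using
    sum_smul_apply_single ((fderiv ℂ (fderiv ℂ x) u).flip (Pi.single j 1)) v

lemma sum_smul_pd2_right (k : Fin n) :
    ∑ j, w j • pd2 x u k j = fderiv ℂ (fderiv ℂ x) u (Pi.single k 1) w := by
  simpa only [pd2_eq_fderiv] using
    sum_smul_apply_single (fderiv ℂ (fderiv ℂ x) u (Pi.single k 1)) w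

lemma sum_sum_smul_pd2 :
    ∑ i, ∑ j, (v i * w j) • pd2 x u i j = fderiv ℂ (fderiv ℂ x) u v w := by
  simp only [pd2_eq_fderiv, sum_sum_smul_apply_single]

lemma sum_sum_smul_pd3 (k : Fin n) :
    ∑ i, ∑ j, (v i * w j) • pd3 x u k i j =
      fderiv ℂ (fderiv ℂ (fderiv ℂ x)) u (Pi.single k 1) v w := by
  simp only [pd3_eq_fderiv, sum_sum_smul_apply_single]

end Coordinates

section Extension

variable {n : ℕ} [NeZero n]

/-- `extZero` as a continuous linear map; its range is the hyperplane of vectors whose first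
coordinate vanishes. -/
noncomputable def extZeroCLM (n : ℕ) [NeZero n] :
    ({i : Fin n // i ≠ 0} → ℂ) →L[ℂ] (Fin n → ℂ) :=
  .pi fun i => if h : i = 0 then 0 else .proj ⟨i, h⟩

lemma extZeroCLM_apply (m : {i : Fin n // i ≠ 0} → ℂ) : extZeroCLM n m = extZero m := by
  ext i
  by_cases h : i = 0 <;> simp [extZeroCLM, extZero, h]

lemma extOne_eq_single_add_extZero (l : {i : Fin n // i ≠ 0} → ℂ) :
    extOne l = Pi.single 0 1 + extZero l := by
  ext i
  by_cases h : i = 0 <;> simp [extOne, extZero, h]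

lemma span_single_zero_sup_range_extZeroCLM :
    ℂ ∙ (Pi.single 0 1 : Fin n → ℂ)
      ⊔ (extZeroCLM n : ({i : Fin n // i ≠ 0} → ℂ) →ₗ[ℂ] (Fin n → ℂ)).range = ⊤ := by
  refine eq_top_iff.2 fun v _ => Submodule.mem_sup.2
    ⟨v 0 • Pi.single 0 1, Submodule.smul_mem _ _ (Submodule.mem_span_singleton_self _),
      extZeroCLM n fun i => v i, LinearMap.mem_range_self _ _, ?_⟩
  ext i
  by_cases h : i = 0 <;> simp [extZeroCLM, h]

lemma sum_extZero_smul {M : Type*} [AddCommMonoid M] [Module ℂ M]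
    (m : {i : Fin n // i ≠ 0} → ℂ) (f : Fin n → M) :
    ∑ i, extZero m i • f i = ∑ j : {i : Fin n // i ≠ 0}, m j • f j := by
  rw [Fintype.sum_eq_add_sum_subtype_ne _ 0]
  simp [extZero, fun j : {i : Fin n // i ≠ 0} => j.2]

end Extension

theorem osc2_regularity_parametric_general {n : ℕ} [NeZero n] {E : Type*} [NormedAddCommGroup E]
    [NormedSpace ℂ E] (x : (Fin n → ℂ) → E) (u₀ : Fin n → ℂ) (hx : ContDiffAt ℂ 3 x u₀)
    (y : (Fin n → ℂ) × ({i : Fin n // i ≠ 0} → ℂ) × ({i : Fin n // i ≠ 0} → ℂ) × ℂ × ℂ → E)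
    (hy : ∀ u l m a b, y (u, l, m, a, b) =
      x u + a • (∑ i, extOne l i • pd1 x u i)
        + b • ((∑ i, ∑ j, (extOne l i * extOne l j) • pd2 x u i j)
            + (2 : ℂ) • ∑ i, extZero m i • pd1 x u i))
    (l m : {i : Fin n // i ≠ 0} → ℂ) (a b : ℂ) (hb : b ≠ 0) :
    Submodule.span ℂ
      ({y (u₀, l, m, a, b)} ∪ Set.range (fderiv ℂ y (u₀, l, m, a, b)))
      =
    Submodule.span ℂ
      ({x u₀} ∪ Set.range (pd1 x u₀)
        ∪ Set.range (fun j => ∑ i, extOne l i • pd2 x u₀ i j)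
        ∪ Set.range (fun k =>
            (∑ i, ∑ j, (extOne l i * extOne l j) • pd3 x u₀ k i j)
              + (2 : ℂ) • ∑ j : {i : Fin n // i ≠ 0}, m j • pd2 x u₀ k (j : Fin n))) := by
  have hyparam : y = osc2Param x (extZeroCLM n) (Pi.single 0 1) := by
    funext ⟨u, l, m, a, b⟩
    simp only [hy, osc2Param, sum_smul_pd1, sum_sum_smul_pd2, extZeroCLM_apply,
      extOne_eq_single_add_extZero]
  have hsymm : IsSymmSndFDerivAt ℂ x u₀ :=
    hx.isSymmSndFDerivAt (by rw [minSmoothness_of_isRCLikeNormedField]; norm_num)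
  have hC (k : Fin n) : (∑ i, ∑ j, (extOne l i * extOne l j) • pd3 x u₀ k i j)
      + (2 : ℂ) • ∑ j : {i : Fin n // i ≠ 0}, m j • pd2 x u₀ k (j : Fin n) =
      osc2ThirdOrder (𝕜 := ℂ) x u₀ (extOne l) (extZero m) (Pi.single k 1) := by
    rw [← sum_extZero_smul, sum_sum_smul_pd3, sum_smul_pd2_right]
    rfl
  rw [hyparam, span_osc2Param_union_range_fderiv hx hsymm
    span_single_zero_sup_range_extZeroCLM l m a hb]
  simp only [Submodule.span_union, hC, sum_smul_pd2_left, extZeroCLM_apply,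
    ← extOne_eq_single_add_extZero, ← span_range_apply_single, ← pd1_eq_fderiv,
    ContinuousLinearMap.coe_coe]

/-- **Parametric content of 2-osculating regularity (Proposition 4.1 of the paper).**
With `y` the local parametrization of the cone over `Osc₂(X)`,
`y(u, λ, μ, α, β) = x(u) + α ∑ λ_i x_i(u) + β (∑ λ_i λ_j x_{ij}(u) + 2 ∑ μ_i x_i(u))`
(with `λ₁ = 1`, `μ₁ = 0`), at any point `P = (u₀, λ, μ, α, β)` with `α ≠ 0`, `β ≠ 0`,
the span of `{y(P)}` together with the range of the Fréchet derivative of `y` at `P`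
equals the span of the `3n+1` vectors `x(u₀)`, `x_k(u₀)`, `∑ λ_i x_{ij}(u₀)` and
`∑ λ_i λ_j x_{kij}(u₀) + 2 ∑_{j≥2} μ_j x_{kj}(u₀)`.
(The paper's index `1` is `0 : Fin n` here.) -/
theorem osc2_regularity_parametric (n N : ℕ) [NeZero n]
    (x : (Fin n → ℂ) → (Fin N → ℂ)) (u₀ : Fin n → ℂ)
    (hx : ContDiffAt ℂ (⊤ : ℕ∞) x u₀)
    (y : (Fin n → ℂ) × ({i : Fin n // i ≠ 0} → ℂ) × ({i : Fin n // i ≠ 0} → ℂ) × ℂ × ℂ →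
      (Fin N → ℂ))
    (hy : ∀ u l m a b, y (u, l, m, a, b) =
      x u + a • (∑ i, extOne l i • pd1 x u i)
        + b • ((∑ i, ∑ j, (extOne l i * extOne l j) • pd2 x u i j)
            + (2 : ℂ) • ∑ i, extZero m i • pd1 x u i))
    (l m : {i : Fin n // i ≠ 0} → ℂ) (a b : ℂ) (ha : a ≠ 0) (hb : b ≠ 0) :
    Submodule.span ℂ
      ({y (u₀, l, m, a, b)} ∪ Set.range (fderiv ℂ y (u₀, l, m, a, b)))
      =
    Submodule.span ℂ
      ({x u₀} ∪ Set.range (pd1 x u₀)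
        ∪ Set.range (fun j => ∑ i, extOne l i • pd2 x u₀ i j)
        ∪ Set.range (fun k =>
            (∑ i, ∑ j, (extOne l i * extOne l j) • pd3 x u₀ k i j)
              + (2 : ℂ) • ∑ j : {i : Fin n // i ≠ 0}, m j • pd2 x u₀ k (j : Fin n))) :=
  osc2_regularity_parametric_general x u₀ (hx.of_le (WithTop.coe_le_coe.2 le_top)) y hy l m a b hb
end
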